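/- arXiv:2008.02839 — 3 statements merged into one kernel-verified Lean document; each statement's English description precedes it below -/
import Mathlib

section
/- For any fixed α > 0, the solution map y ↦ x̂_α(y) is continuous from Y to X (with respect to the norm topologies); in fact it is Lipschitz continuous with constant β₁ / (α ρ₀). -/
/-!
The functional `J(·; y)` is a convex function plus two squared norms, so at its minimizer it grows
quadratically: `‖A (u - x̂)‖² + α ρ₀ ‖u - x̂‖² ≤ J(u; y) - J(x̂; y)` (`quadratic_growth_of_forall_le`).
Write this inequality for `y` tested at `x̂(y')` and for `y'` tested at `x̂(y)`, and add. With
`d = x̂(y') - x̂(y)` and `e = y' - y`, all regularization terms on the right cancel and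
`2 (‖A d‖² + α ρ₀ ‖d‖²) ≤ 2 ⟪e, A d⟫ ≤ 2 β₁ ‖e‖ ‖d‖`.
Dropping `‖A d‖²` and dividing by `‖d‖` gives the Lipschitz bound, hence continuity.
-/

theorem norm_sq_convex_comb {E : Type*} [NormedAddCommGroup E] [InnerProductSpace ℝ E]
    (a b : E) (t : ℝ) :
    ‖(1 - t) • a + t • b‖ ^ 2
      = (1 - t) * ‖a‖ ^ 2 + t * ‖b‖ ^ 2 - t * (1 - t) * ‖b - a‖ ^ 2 := by
  rw [norm_add_sq_real, norm_sub_sq_real, norm_smul, norm_smul, mul_pow, mul_pow,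
    Real.norm_eq_abs, Real.norm_eq_abs, sq_abs, sq_abs, real_inner_smul_left,
    real_inner_smul_right, real_inner_comm a b]
  ring

/-- Quadratic growth at a minimizer. The constant is sharp: evaluating only at the midpoint
would lose a factor of two, so small steps towards `u` are used instead. -/
theorem quadratic_growth_of_forall_le
    {X Y : Type*} [NormedAddCommGroup X] [InnerProductSpace ℝ X]
    [NormedAddCommGroup Y] [InnerProductSpace ℝ Y]
    (A : X →L[ℝ] Y) (R : X → ℝ) (hR : ConvexOn ℝ Set.univ R)
    (ρ α : ℝ) (hα : 0 < α) (y : Y) (x : X)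
    (hx : ∀ u, ‖y - A x‖ ^ 2 + α * (R x + ρ * ‖x‖ ^ 2)
      ≤ ‖y - A u‖ ^ 2 + α * (R u + ρ * ‖u‖ ^ 2)) (u : X) :
    ‖A (u - x)‖ ^ 2 + α * ρ * ‖u - x‖ ^ 2
      ≤ (‖y - A u‖ ^ 2 + α * (R u + ρ * ‖u‖ ^ 2))
        - (‖y - A x‖ ^ 2 + α * (R x + ρ * ‖x‖ ^ 2)) := by
  set S := ‖A (u - x)‖ ^ 2 + α * ρ * ‖u - x‖ ^ 2 with hS
  set D := (‖y - A u‖ ^ 2 + α * (R u + ρ * ‖u‖ ^ 2))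
        - (‖y - A x‖ ^ 2 + α * (R x + ρ * ‖x‖ ^ 2)) with hD
  have key : ∀ t : ℝ, 0 < t → t < 1 → (1 - t) * S ≤ D := by
    intro t h0 h1
    have hm := hx ((1 - t) • x + t • u)
    have hc := hR.2 (Set.mem_univ x) (Set.mem_univ u) (sub_nonneg.2 h1.le) h0.le (by ring)
    have e1 : y - A ((1 - t) • x + t • u) = (1 - t) • (y - A x) + t • (y - A u) := by
      simp only [map_add, map_smul]
      module
    have e2 : ‖(y - A u) - (y - A x)‖ = ‖A (u - x)‖ := by
      rw [map_sub, ← norm_neg]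
      congr 1
      abel
    rw [e1, norm_sq_convex_comb, norm_sq_convex_comb, e2] at hm
    simp only [smul_eq_mul] at hc
    have hc' := mul_le_mul_of_nonneg_left hc hα.le
    have : t * ((1 - t) * S) ≤ t * D := by
      rw [hS, hD]
      linarith
    exact le_of_mul_le_mul_left this h0
  have hD0 : 0 ≤ D := sub_nonneg.2 (hx u)
  by_contra! hlt
  have hSpos : 0 < S := hD0.trans_lt hlt
  -- For this `t` one has `(1 - t) * S = (S + D) / 2 > D`.
  have ht := key ((S - D) / (2 * S)) (div_pos (by linarith) (by linarith))
    ((div_lt_one (by linarith)).2 (by linarith))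
  have : (1 - (S - D) / (2 * S)) * S = (S + D) / 2 := by
    field_simp
    ring
  linarith

/-- For fixed `α > 0`, the solution map `y ↦ x̂_α(y)` is continuous from `Y` to `X`;
in fact it is Lipschitz continuous with constant `β₁ / (α ρ₀)`. -/
theorem solution_map_lipschitz_continuous
    {X Y : Type*} [NormedAddCommGroup X] [InnerProductSpace ℝ X]
    [NormedAddCommGroup Y] [InnerProductSpace ℝ Y]
    (A : X →L[ℝ] Y) (β₁ : ℝ) (hβ₁ : ‖A‖ ≤ β₁)
    (R' : X → ℝ)
    (hR'conv : ConvexOn ℝ Set.univ R') (hR'lip : LipschitzWith 1 R')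
    (ρ₀ α : ℝ) (hρ₀ : 0 < ρ₀) (hα : 0 < α)
    (J : X → Y → ℝ)
    (hJ : ∀ x y, J x y = ‖y - A x‖ ^ 2 + α * (R' x + ρ₀ * ‖x‖ ^ 2))
    (xhat : Y → X)
    (hxhat : ∀ y : Y, ∀ x : X, J (xhat y) y ≤ J x y) :
    Continuous xhat ∧
      ∀ y y' : Y, ‖xhat y' - xhat y‖ ≤ (β₁ / (α * ρ₀)) * ‖y' - y‖ := by
  have hlip : ∀ y y' : Y, ‖xhat y' - xhat y‖ ≤ (β₁ / (α * ρ₀)) * ‖y' - y‖ := by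
    intro y y'
    simp only [hJ] at hxhat
    have h1 := quadratic_growth_of_forall_le A R' hR'conv ρ₀ α hα y (xhat y)
      (hxhat y) (xhat y')
    have h2 := quadratic_growth_of_forall_le A R' hR'conv ρ₀ α hα y' (xhat y')
      (hxhat y') (xhat y)
    rw [← neg_sub (xhat y') (xhat y), map_neg, norm_neg, norm_neg] at h2
    have hcross : ‖y - A (xhat y')‖ ^ 2 - ‖y - A (xhat y)‖ ^ 2
        + (‖y' - A (xhat y)‖ ^ 2 - ‖y' - A (xhat y')‖ ^ 2)
        = 2 * inner ℝ (y' - y) (A (xhat y' - xhat y)) := by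
      simp only [map_sub, norm_sub_sq_real, inner_sub_left, inner_sub_right]
      ring
    have hβ : 0 ≤ β₁ := (norm_nonneg A).trans hβ₁
    have hcs : inner ℝ (y' - y) (A (xhat y' - xhat y))
        ≤ ‖y' - y‖ * (β₁ * ‖xhat y' - xhat y‖) :=
      (real_inner_le_norm _ _).trans
        (mul_le_mul_of_nonneg_left (A.le_of_opNorm_le hβ₁ _) (norm_nonneg _))
    have hsq := sq_nonneg ‖A (xhat y' - xhat y)‖
    have hαρ : 0 < α * ρ₀ := mul_pos hα hρ₀
    rw [div_mul_eq_mul_div, le_div_iff₀ hαρ]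
    rcases (norm_nonneg (xhat y' - xhat y)).eq_or_lt with h0 | hpos
    · rw [← h0, zero_mul]
      exact mul_nonneg hβ (norm_nonneg _)
    · refine le_of_mul_le_mul_right ?_ hpos
      linarith
  refine ⟨?_, hlip⟩
  refine (LipschitzWith.of_dist_le_mul (K := (β₁ / (α * ρ₀)).toNNReal) fun a b => ?_).continuous
  rw [dist_eq_norm, dist_eq_norm]
  exact (hlip b a).trans (mul_le_mul_of_nonneg_right (Real.le_coe_toNNReal _) (norm_nonneg _))
end

section
/- Suppose y⁰ ∈ Y is attainable, i.e., {x : A x = y⁰} is nonempty, and let x† be the unique minimizer of R over this set. Then the minimizers of the penalized problems converge to x† as the penalty parameter vanishes: lim_{α → 0⁺} x̂_α(y⁰) = x† in the norm of X, where x̂_α(y⁰) minimizes x ↦ ‖y⁰ − A x‖²_Y + α R(x). -/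
/-!
Write `F x = ‖y⁰ - A x‖²` and `x_α = x̂_α(y⁰)`. The functional `J_α = F + α R` is strongly convex,
so its minimizer satisfies the quadratic growth estimate
`α ρ₀ / 2 * ‖x_α - x‖² ≤ J_α x - J_α x_α` (`quadratic_growth`, from the midpoint of `x_α` and `x`).
For every `x` with `F x ≤ F x_α` this becomes `ρ₀ / 2 * ‖x_α - x‖² ≤ R x - R x_α`. It applies to

* `x = x†`, where `F` vanishes, so that `R x_α ≤ R x†`;
* `x = x_β` with `0 < β ≤ α`, since `F x_β ≤ F x_α`; hence `α ↦ R x_α` is antitone.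

Being antitone and bounded above, `R x_α` converges as `α → 0⁺`, and the second estimate then makes
`x_α` Cauchy, without any weak compactness. Its limit `x` satisfies `A x = y⁰`, because
`F x_α ≤ α (R x† - R x_α) → 0`, so `R x† ≤ R x`, and the first estimate passes to the limit as
`ρ₀ / 2 * ‖x - x†‖² ≤ R x† - R x ≤ 0`.
-/

open Filter Topology

/-- Parallelogram law for the midpoint of `a` and `b`. -/
lemma norm_midpoint_sq {E : Type*} [NormedAddCommGroup E] [InnerProductSpace ℝ E] (a b : E) :
    ‖(1 / 2 : ℝ) • a + (1 / 2 : ℝ) • b‖ ^ 2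
      = (‖a‖ ^ 2 + ‖b‖ ^ 2) / 2 - ‖a - b‖ ^ 2 / 4 := by
  have h := parallelogram_law_with_norm ℝ a b
  rw [← smul_add, norm_smul, Real.norm_of_nonneg (by norm_num)]
  linarith

/-- Quadratic growth of the Tikhonov functional around a minimizer `z`. Testing minimality with the
midpoint of `z` and `x` loses a factor `2` against the optimal constant `α * ρ₀`. -/
lemma quadratic_growth
    {X Y : Type*} [NormedAddCommGroup X] [InnerProductSpace ℝ X]
    [NormedAddCommGroup Y] [InnerProductSpace ℝ Y]
    (A : X →L[ℝ] Y) (R' : X → ℝ) (hR'conv : ConvexOn ℝ Set.univ R')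
    (ρ₀ : ℝ) (R : X → ℝ) (hR : ∀ x, R x = R' x + ρ₀ * ‖x‖ ^ 2)
    (y0 : Y) (α : ℝ) (hα : 0 < α) (z : X)
    (hz : ∀ x : X, ‖y0 - A z‖ ^ 2 + α * R z ≤ ‖y0 - A x‖ ^ 2 + α * R x) (x : X) :
    α * (ρ₀ / 2 * ‖z - x‖ ^ 2) ≤
      (‖y0 - A x‖ ^ 2 + α * R x) - (‖y0 - A z‖ ^ 2 + α * R z) := by
  have hm := hz ((1 / 2 : ℝ) • z + (1 / 2 : ℝ) • x)
  have hc : R' ((1 / 2 : ℝ) • z + (1 / 2 : ℝ) • x) ≤ (1 / 2 : ℝ) * R' z + (1 / 2 : ℝ) * R' x :=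
    hR'conv.2 (Set.mem_univ z) (Set.mem_univ x) (by norm_num) (by norm_num) (by norm_num)
  have hA : y0 - A ((1 / 2 : ℝ) • z + (1 / 2 : ℝ) • x)
      = (1 / 2 : ℝ) • (y0 - A z) + (1 / 2 : ℝ) • (y0 - A x) := by
    rw [map_add, map_smul, map_smul]
    module
  have hRm : R ((1 / 2 : ℝ) • z + (1 / 2 : ℝ) • x)
      ≤ (R z + R x) / 2 - ρ₀ / 4 * ‖z - x‖ ^ 2 := by
    rw [hR, hR z, hR x, norm_midpoint_sq]
    linarith
  rw [hA, norm_midpoint_sq] at hm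
  have := mul_le_mul_of_nonneg_left hRm hα.le
  nlinarith [sq_nonneg ‖y0 - A z - (y0 - A x)‖]

/-- For attainable data `y⁰`, the minimizers of the penalized problems converge
to the `R`-minimizing solution `x†` as the penalty parameter vanishes:
`lim_{α → 0⁺} x̂_α(y⁰) = x†` in the norm of `X`. -/
theorem convergence_of_penalized_minimizers_clean_data
    {X Y : Type*} [NormedAddCommGroup X] [InnerProductSpace ℝ X] [CompleteSpace X]
    [NormedAddCommGroup Y] [InnerProductSpace ℝ Y]
    (A : X →L[ℝ] Y) (R' : X → ℝ)
    (hR'conv : ConvexOn ℝ Set.univ R') (hR'lip : LipschitzWith 1 R')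
    (ρ₀ : ℝ) (hρ₀ : 0 < ρ₀)
    (R : X → ℝ) (hR : ∀ x, R x = R' x + ρ₀ * ‖x‖ ^ 2)
    (y0 : Y) (hne : {x : X | A x = y0}.Nonempty)
    (xdag : X) (hdagmem : A xdag = y0)
    (hdagmin : ∀ x : X, A x = y0 → R xdag ≤ R x)
    (xhat : ℝ → X)
    (hxhat : ∀ α : ℝ, 0 < α → ∀ x : X,
      ‖y0 - A (xhat α)‖ ^ 2 + α * R (xhat α) ≤ ‖y0 - A x‖ ^ 2 + α * R x) :
    Filter.Tendsto xhat (nhdsWithin 0 (Set.Ioi 0)) (nhds xdag) := by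
  have hRcont : Continuous R := by
    rw [funext hR]
    have := hR'lip.continuous
    fun_prop
  have key : ∀ α : ℝ, 0 < α → ∀ x : X, ‖y0 - A x‖ ^ 2 ≤ ‖y0 - A (xhat α)‖ ^ 2 →
      ρ₀ / 2 * ‖xhat α - x‖ ^ 2 ≤ R x - R (xhat α) := by
    intro α hα x hx
    have h := quadratic_growth A R' hR'conv ρ₀ R hR y0 α hα (xhat α) (hxhat α hα) x
    refine le_of_mul_le_mul_left ?_ hα
    linarith
  have keydag : ∀ α : ℝ, 0 < α → ρ₀ / 2 * ‖xhat α - xdag‖ ^ 2 ≤ R xdag - R (xhat α) := by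
    intro α hα
    refine key α hα xdag ?_
    rw [hdagmem, sub_self, norm_zero, zero_pow two_ne_zero]
    positivity
  have keymono : ∀ α β : ℝ, 0 < β → β ≤ α →
      ρ₀ / 2 * ‖xhat α - xhat β‖ ^ 2 ≤ R (xhat β) - R (xhat α) := by
    intro α β hβ hle
    rcases hle.eq_or_lt with rfl | hlt
    · simp
    have hα := hβ.trans hlt
    refine key α hα _ ?_
    -- Adding `β` times the optimality of `x_α` to `α` times that of `x_β` eliminates `R`.
    have h1 := mul_le_mul_of_nonneg_left (hxhat α hα (xhat β)) hβ.le
    have h2 := mul_le_mul_of_nonneg_left (hxhat β hβ (xhat α)) hα.le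
    refine le_of_mul_le_mul_left ?_ (sub_pos.2 hlt)
    linarith
  have hanti : AntitoneOn (fun α => R (xhat α)) (Set.Ioi 0) := by
    intro β hβ α _ hle
    have h := keymono α β hβ hle
    have : 0 ≤ ρ₀ / 2 * ‖xhat α - xhat β‖ ^ 2 := by positivity
    exact sub_nonneg.1 (this.trans h)
  have hbdd : BddAbove ((fun α => R (xhat α)) '' Set.Ioi 0) := by
    refine ⟨R xdag, ?_⟩
    rintro _ ⟨α, hα, rfl⟩
    have h := keydag α hα
    have : 0 ≤ ρ₀ / 2 * ‖xhat α - xdag‖ ^ 2 := by positivity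
    exact sub_nonneg.1 (this.trans h)
  obtain ⟨L, hL⟩ : ∃ L, Tendsto (fun α => R (xhat α)) (𝓝[>] 0) (𝓝 L) :=
    ⟨_, hanti.tendsto_nhdsGT hbdd⟩
  have hpos : ∀ᶠ α : ℝ in 𝓝[>] 0, 0 < α := self_mem_nhdsWithin
  have hcauchy : Cauchy (map xhat (𝓝[>] 0)) := by
    rw [Metric.cauchy_iff]
    refine ⟨inferInstance, fun ε hε => ?_⟩
    -- Values of `R` within `δ = ρ₀ ε² / 4` of `L` differ by less than `ρ₀ / 2 * ε²`.
    have hδ : 0 < ρ₀ * ε ^ 2 / 4 := by positivity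
    have hev := (hL.eventually (Metric.ball_mem_nhds L hδ)).and hpos
    refine ⟨_, image_mem_map hev, ?_⟩
    rintro _ ⟨α, ⟨hαL, hα⟩, rfl⟩ _ ⟨β, ⟨hβL, hβ⟩, rfl⟩
    rw [Real.dist_eq, abs_lt] at hαL hβL
    rw [dist_eq_norm]
    have hd : ρ₀ / 2 * ‖xhat α - xhat β‖ ^ 2 < ρ₀ / 2 * ε ^ 2 := by
      rcases le_total β α with h | h
      · linarith [keymono α β hβ h]
      · rw [norm_sub_rev]
        linarith [keymono β α hα h]
    exact lt_of_pow_lt_pow_left₀ 2 hε.le (lt_of_mul_lt_mul_left hd (by positivity))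
  obtain ⟨x, hx⟩ := CompleteSpace.complete hcauchy
  have hx : Tendsto xhat (𝓝[>] 0) (𝓝 x) := hx
  have hRx : Tendsto (fun α => R (xhat α)) (𝓝[>] 0) (𝓝 (R x)) := (hRcont.tendsto x).comp hx
  have hAx : A x = y0 := by
    have hF : Tendsto (fun α => ‖y0 - A (xhat α)‖ ^ 2) (𝓝[>] 0) (𝓝 (‖y0 - A x‖ ^ 2)) :=
      ((by fun_prop : Continuous fun u => ‖y0 - A u‖ ^ 2).tendsto x).comp hx
    have hid : Tendsto (fun α : ℝ => α) (𝓝[>] 0) (𝓝 0) := nhdsWithin_le_nhds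
    have hB := hid.mul (hRx.const_sub (R xdag))
    rw [zero_mul] at hB
    have h0 : ‖y0 - A x‖ ^ 2 ≤ 0 := by
      refine le_of_tendsto_of_tendsto hF hB ?_
      filter_upwards [hpos] with α hα
      have h := hxhat α hα xdag
      rw [hdagmem, sub_self, norm_zero] at h
      linarith
    have : ‖y0 - A x‖ = 0 := pow_eq_zero_iff two_ne_zero |>.1 (le_antisymm h0 (sq_nonneg _))
    exact (sub_eq_zero.1 (norm_eq_zero.1 this)).symm
  have hlim : ρ₀ / 2 * ‖x - xdag‖ ^ 2 ≤ R xdag - R x := by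
    refine le_of_tendsto_of_tendsto
      (((by fun_prop : Continuous fun u => ρ₀ / 2 * ‖u - xdag‖ ^ 2).tendsto x).comp hx)
      (hRx.const_sub (R xdag)) ?_
    filter_upwards [hpos] with α hα using keydag α hα
  have hxd : x = xdag := by
    have h0 : ρ₀ / 2 * ‖x - xdag‖ ^ 2 ≤ ρ₀ / 2 * 0 := by linarith [hdagmin x hAx]
    have h1 := le_of_mul_le_mul_left h0 (by positivity)
    have : ‖x - xdag‖ = 0 := pow_eq_zero_iff two_ne_zero |>.1 (le_antisymm h1 (sq_nonneg _))
    exact sub_eq_zero.1 (norm_eq_zero.1 this)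
  exact hxd ▸ hx
end

section
/- Let y⁰ ∈ Y be attainable with R-minimizing solution x†, and for each noise level δ > 0 let y^δ ∈ Y satisfy ‖y^δ − y⁰‖_Y ≤ δ. If the penalty rule α = α(δ) satisfies α(δ) → 0 and δ / α(δ) → 0 as δ → 0, then ‖x̂_{α(δ)}(y^δ) − x†‖_X → 0 as δ → 0; moreover ‖x̂_α(y^δ) − x†‖_X ≤ β₁ δ / (α ρ₀) + ‖x̂_α(y⁰) − x†‖_X. -/
/-!
The functional `J_α(·; y) = ‖y - A ·‖² + α R` is strongly convex with modulus `2 α ρ₀`, because the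
summand `α ρ₀ ‖·‖²` is. It therefore grows quadratically around a minimizer `p`:
`J_α(p; y) + α ρ₀ ‖x - p‖² ≤ J_α(x; y)` (`tikhonov_growth`). Applying this to the minimizers `x₁`, `x₀`
for data `y₁`, `y₀`, each tested against the other, and adding, all terms in `R` cancel and
`2 α ρ₀ ‖x₁ - x₀‖² ≤ 2 ⟪y₁ - y₀, A (x₁ - x₀)⟫ ≤ 2 ‖y₁ - y₀‖ ‖A‖ ‖x₁ - x₀‖`,
so that `x̂_α` is Lipschitz in the data (`tikhonov_stability`). The error bound is this estimate
combined with the triangle inequality through `x̂_α(y⁰)`, and convergence follows by squeezing.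
-/

/-- In an inner product space, `‖·‖²` satisfies the convexity identity with the exact
quadratic defect. -/
lemma norm_sq_segment {E : Type*} [NormedAddCommGroup E] [InnerProductSpace ℝ E] (u v : E) (t : ℝ) :
    ‖(1 - t) • u + t • v‖ ^ 2 =
      (1 - t) * ‖u‖ ^ 2 + t * ‖v‖ ^ 2 - t * (1 - t) * ‖v - u‖ ^ 2 := by
  rw [norm_add_sq_real, norm_sub_sq_real, norm_smul, norm_smul, mul_pow, mul_pow,
    real_inner_smul_left, real_inner_smul_right, Real.norm_eq_abs, Real.norm_eq_abs, sq_abs, sq_abs,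
    real_inner_comm v u]
  ring

/-- Quadratic growth of the regularized functional around a minimizer `p`. -/
lemma tikhonov_growth {X Y : Type*} [NormedAddCommGroup X] [InnerProductSpace ℝ X]
    [NormedAddCommGroup Y] [InnerProductSpace ℝ Y] (A : X →L[ℝ] Y) {R' : X → ℝ}
    (hconv : ConvexOn ℝ Set.univ R') {ρ₀ : ℝ} {R : X → ℝ}
    (hR : ∀ x, R x = R' x + ρ₀ * ‖x‖ ^ 2) {a : ℝ} (ha : 0 < a) (y : Y) {p : X}
    (hp : ∀ x, ‖y - A p‖ ^ 2 + a * R p ≤ ‖y - A x‖ ^ 2 + a * R x) (x : X) :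
    ‖y - A p‖ ^ 2 + a * R p + a * ρ₀ * ‖x - p‖ ^ 2 ≤ ‖y - A x‖ ^ 2 + a * R x := by
  -- Minimality on the segment from `p` to `x`, divided by the segment parameter.
  have key : ∀ t : ℝ, 0 < t → t < 1 →
      (1 - t) * (a * ρ₀ * ‖x - p‖ ^ 2) ≤
        (‖y - A x‖ ^ 2 + a * R x) - (‖y - A p‖ ^ 2 + a * R p) := by
    intro t ht ht1
    have h1 := hp ((1 - t) • p + t • x)
    have h2 : R' ((1 - t) • p + t • x) ≤ (1 - t) * R' p + t * R' x := by
      simpa using hconv.2 (Set.mem_univ p) (Set.mem_univ x) (by linarith : 0 ≤ 1 - t) ht.le (by ring)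
    have h3 : y - A ((1 - t) • p + t • x) = (1 - t) • (y - A p) + t • (y - A x) := by
      simp only [map_add, map_smul]
      module
    have h4 : 0 ≤ t * (1 - t) * ‖(y - A x) - (y - A p)‖ ^ 2 :=
      mul_nonneg (mul_nonneg ht.le (by linarith)) (sq_nonneg _)
    rw [h3, norm_sq_segment, hR ((1 - t) • p + t • x), norm_sq_segment] at h1
    have h5 := mul_le_mul_of_nonneg_left h2 ha.le
    rw [hR p] at h1 ⊢
    rw [hR x]
    refine le_of_mul_le_mul_left ?_ ht
    linarith
  -- Let the segment parameter tend to `0`.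
  have hlim : Filter.Tendsto (fun t : ℝ => (1 - t) * (a * ρ₀ * ‖x - p‖ ^ 2))
      (nhdsWithin 0 (Set.Ioi 0)) (nhds (a * ρ₀ * ‖x - p‖ ^ 2)) := by
    have hc : Continuous fun t : ℝ => (1 - t) * (a * ρ₀ * ‖x - p‖ ^ 2) := by fun_prop
    simpa using (hc.tendsto 0).mono_left nhdsWithin_le_nhds
  have := le_of_tendsto hlim (by
    filter_upwards [Ioo_mem_nhdsGT (zero_lt_one (α := ℝ))] with t ht using key t ht.1 ht.2)
  linarith

/-- Lipschitz dependence of the regularized reconstruction on the data. -/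
lemma tikhonov_stability {X Y : Type*} [NormedAddCommGroup X] [InnerProductSpace ℝ X]
    [NormedAddCommGroup Y] [InnerProductSpace ℝ Y] (A : X →L[ℝ] Y) {R' : X → ℝ}
    (hconv : ConvexOn ℝ Set.univ R') {ρ₀ : ℝ} (hρ₀ : 0 < ρ₀) {R : X → ℝ}
    (hR : ∀ x, R x = R' x + ρ₀ * ‖x‖ ^ 2) {a : ℝ} (ha : 0 < a) {y₁ y₀ : Y} {x₁ x₀ : X}
    (h₁ : ∀ x, ‖y₁ - A x₁‖ ^ 2 + a * R x₁ ≤ ‖y₁ - A x‖ ^ 2 + a * R x)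
    (h₀ : ∀ x, ‖y₀ - A x₀‖ ^ 2 + a * R x₀ ≤ ‖y₀ - A x‖ ^ 2 + a * R x) :
    ‖x₁ - x₀‖ ≤ ‖A‖ * ‖y₁ - y₀‖ / (a * ρ₀) := by
  have g₁ := tikhonov_growth A hconv hR ha y₁ h₁ x₀
  have g₀ := tikhonov_growth A hconv hR ha y₀ h₀ x₁
  rw [norm_sub_rev x₀ x₁] at g₁
  have hcross : ‖y₁ - A x₀‖ ^ 2 - ‖y₁ - A x₁‖ ^ 2 + ‖y₀ - A x₁‖ ^ 2 - ‖y₀ - A x₀‖ ^ 2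
      = 2 * inner ℝ (y₁ - y₀) (A (x₁ - x₀)) := by
    simp only [norm_sub_sq_real, map_sub, inner_sub_left, inner_sub_right]
    ring
  have hcs : inner ℝ (y₁ - y₀) (A (x₁ - x₀)) ≤ ‖y₁ - y₀‖ * (‖A‖ * ‖x₁ - x₀‖) :=
    (real_inner_le_norm _ _).trans
      (mul_le_mul_of_nonneg_left (A.le_opNorm _) (norm_nonneg _))
  rw [le_div_iff₀ (mul_pos ha hρ₀)]
  rcases (norm_nonneg (x₁ - x₀)).eq_or_lt with h | h
  · rw [← h, zero_mul]
    positivity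
  · refine le_of_mul_le_mul_right ?_ h
    linarith

/-- With noisy data `y^δ`, `‖y^δ − y⁰‖ ≤ δ`, and a penalty rule `α(δ) → 0` with
`δ/α(δ) → 0`, the regularized reconstructions converge to the `R`-minimizing solution `x†`:
`‖x̂_{α(δ)}(y^δ) − x†‖ → 0` as `δ → 0`; moreover, for every `δ > 0` and `α > 0`,
`‖x̂_α(y^δ) − x†‖ ≤ β₁ δ / (α ρ₀) + ‖x̂_α(y⁰) − x†‖`. -/
theorem convergence_of_regularized_reconstructions
    {X Y : Type*} [NormedAddCommGroup X] [InnerProductSpace ℝ X] [CompleteSpace X]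
    [NormedAddCommGroup Y] [InnerProductSpace ℝ Y]
    (A : X →L[ℝ] Y) (β₁ : ℝ) (hβ₁ : ‖A‖ ≤ β₁)
    (R' : X → ℝ)
    (hR'conv : ConvexOn ℝ Set.univ R') (hR'lip : LipschitzWith 1 R')
    (ρ₀ : ℝ) (hρ₀ : 0 < ρ₀)
    (R : X → ℝ) (hR : ∀ x, R x = R' x + ρ₀ * ‖x‖ ^ 2)
    (y0 : Y)
    (xdag : X) (hdagmem : A xdag = y0)
    (hdagmin : ∀ x : X, A x = y0 → R xdag ≤ R x)
    -- `x̂_α(y)`: the minimizer of `J_α(·; y)` for every `α > 0` and `y`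
    (xhat : ℝ → Y → X)
    (hxhat : ∀ α : ℝ, 0 < α → ∀ y : Y, ∀ x : X,
      ‖y - A (xhat α y)‖ ^ 2 + α * R (xhat α y) ≤ ‖y - A x‖ ^ 2 + α * R x)
    -- convergence for clean data (proved separately)
    (hclean : Filter.Tendsto (fun α => xhat α y0) (nhdsWithin 0 (Set.Ioi 0)) (nhds xdag))
    -- noisy data: for each noise level `δ > 0`, `‖y^δ − y⁰‖ ≤ δ`
    (ynoisy : ℝ → Y) (hynoisy : ∀ δ : ℝ, 0 < δ → ‖ynoisy δ - y0‖ ≤ δ)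
    -- penalty rule
    (α : ℝ → ℝ) (hαpos : ∀ δ : ℝ, 0 < δ → 0 < α δ)
    (hα0 : Filter.Tendsto α (nhdsWithin 0 (Set.Ioi 0)) (nhds 0))
    (hδα : Filter.Tendsto (fun δ => δ / α δ) (nhdsWithin 0 (Set.Ioi 0)) (nhds 0)) :
    Filter.Tendsto (fun δ => ‖xhat (α δ) (ynoisy δ) - xdag‖)
        (nhdsWithin 0 (Set.Ioi 0)) (nhds 0) ∧
      ∀ δ : ℝ, 0 < δ → ∀ a : ℝ, 0 < a →
        ‖xhat a (ynoisy δ) - xdag‖ ≤ β₁ * δ / (a * ρ₀) + ‖xhat a y0 - xdag‖ := by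
  have hbound : ∀ δ : ℝ, 0 < δ → ∀ a : ℝ, 0 < a →
      ‖xhat a (ynoisy δ) - xdag‖ ≤ β₁ * δ / (a * ρ₀) + ‖xhat a y0 - xdag‖ := by
    intro δ hδ a ha
    have hstab : ‖xhat a (ynoisy δ) - xhat a y0‖ ≤ β₁ * δ / (a * ρ₀) := by
      refine (tikhonov_stability A hR'conv hρ₀ hR ha (hxhat a ha _) (hxhat a ha _)).trans ?_
      have hβ₁' : 0 ≤ β₁ := (norm_nonneg A).trans hβ₁
      gcongr
      exact hynoisy δ hδ
    exact (norm_sub_le_norm_sub_add_norm_sub _ (xhat a y0) _).trans (by gcongr)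
  refine ⟨?_, hbound⟩
  have hpos : ∀ᶠ δ : ℝ in nhdsWithin 0 (Set.Ioi 0), 0 < δ := self_mem_nhdsWithin
  have hα0' : Filter.Tendsto α (nhdsWithin 0 (Set.Ioi 0)) (nhdsWithin 0 (Set.Ioi 0)) :=
    tendsto_nhdsWithin_iff.2 ⟨hα0, hpos.mono hαpos⟩
  have hlim : Filter.Tendsto (fun δ => β₁ / ρ₀ * (δ / α δ) + ‖xhat (α δ) y0 - xdag‖)
      (nhdsWithin 0 (Set.Ioi 0)) (nhds 0) := by
    simpa using (hδα.const_mul (β₁ / ρ₀)).add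
      (tendsto_iff_norm_sub_tendsto_zero.1 (hclean.comp hα0'))
  refine squeeze_zero' (Filter.Eventually.of_forall fun _ => norm_nonneg _) ?_ hlim
  filter_upwards [hpos] with δ hδ
  refine (hbound δ hδ (α δ) (hαpos δ hδ)).trans_eq ?_
  rw [div_mul_div_comm, mul_comm ρ₀]
end
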